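/- arXiv:2212.02640 — 5 statements merged into one kernel-verified Lean document; each statement's English description precedes it below -/
import Mathlib

section
/- For all natural numbers j, a, b, x, y with x < 2^j and y < 2^j, the bit-interleaving (z-order) map Z satisfies Z (a * 2^j + x) (b * 2^j + y) = 4^j * Z a b + Z x y. -/
/-- The bit-interleaving (z-order) map: the binary expansion of `Z x y` interleaves
the bits of `y` and `x`, with the bits of `x` in the even positions and the bits of
`y` in the odd positions.  The sum is finite since all sufficiently high bits vanish. -/
noncomputable def Z (x y : ℕ) : ℕ :=
  ∑ᶠ i : ℕ, (x / 2 ^ i % 2 * 4 ^ i + y / 2 ^ i % 2 * 2 * 4 ^ i)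

/-!
Let `S n` be the number obtained by reading the binary digits of `n` in base `4`. Then
`Z x y = S x + 2 * S y`, which reduces the claim to the one-variable identity
`S (a * 2 ^ j + x) = 4 ^ j * S a + S x`. It holds because the digits of `a * 2 ^ j + x` are those
of `x`, padded to length `j`, followed by those of `a`; for the proof one strips the lowest digit
and inducts on `j`.
-/

section Digits

variable {R : Type*} [Semiring R] (c : R) {b : ℕ}

theorem ofDigits_eq_sum_range_getD (L : List ℕ) :
    Nat.ofDigits c L = ∑ i ∈ Finset.range L.length, (L.getD i 0 : R) * c ^ i := by
  induction L with
  | nil => rfl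
  | cons d L ih =>
    have shift (i : ℕ) : c * ((L.getD i 0 : R) * c ^ i) = (L.getD i 0 : R) * c ^ (i + 1) := by
      rw [pow_succ', (Nat.cast_commute _ c).left_comm]
    simp only [Nat.ofDigits, ih, Finset.mul_sum, shift, List.length_cons, Finset.sum_range_succ',
      List.getD_cons_succ, List.getD_cons_zero, pow_zero, mul_one, add_comm]

theorem support_div_pow_mod_mul_pow_subset (hb : 1 < b) (n : ℕ) :
    (Function.support fun i ↦ ((n / b ^ i % b : ℕ) : R) * c ^ i) ⊆
      Finset.range (b.digits n).length := by
  intro i hi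
  by_contra hlen
  have hn : n < b ^ i := (Nat.digits_length_le_iff hb n).mp (by simpa using hlen)
  exact hi (by simp [Nat.div_eq_of_lt hn])

theorem finsum_div_pow_mod_mul_pow (hb : 1 < b) (n : ℕ) :
    ∑ᶠ i, ((n / b ^ i % b : ℕ) : R) * c ^ i = Nat.ofDigits c (b.digits n) := by
  rw [finsum_eq_sum_of_support_subset _ (support_div_pow_mod_mul_pow_subset c hb n),
    ofDigits_eq_sum_range_getD]
  simp only [Nat.getD_digits n _ hb]

theorem ofDigits_digits_eq_mod_add (hb : 1 < b) (n : ℕ) :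
    Nat.ofDigits c (b.digits n) = (n % b : ℕ) + c * Nat.ofDigits c (b.digits (n / b)) := by
  rcases eq_or_ne n 0 with rfl | hn
  · simp [Nat.ofDigits]
  · rw [Nat.digits_eq_cons_digits_div hb hn, Nat.ofDigits]

theorem ofDigits_digits_mul_pow_add (hb : 1 < b) (a : ℕ) {j x : ℕ} (hx : x < b ^ j) :
    Nat.ofDigits c (b.digits (a * b ^ j + x)) =
      c ^ j * Nat.ofDigits c (b.digits a) + Nat.ofDigits c (b.digits x) := by
  induction j generalizing x with
  | zero =>
    obtain rfl : x = 0 := by simpa using hx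
    simp [Nat.ofDigits]
  | succ j ih =>
    have hsplit : a * b ^ (j + 1) + x = x + b * (a * b ^ j) := by ring
    have hmod : (a * b ^ (j + 1) + x) % b = x % b := by
      rw [hsplit, Nat.add_mul_mod_self_left]
    have hdiv : (a * b ^ (j + 1) + x) / b = a * b ^ j + x / b := by
      rw [hsplit, Nat.add_mul_div_left _ _ (by lia), add_comm]
    have hxb : x / b < b ^ j := Nat.div_lt_of_lt_mul (by rwa [← pow_succ'])
    rw [ofDigits_digits_eq_mod_add c hb (a * b ^ (j + 1) + x), hmod, hdiv, ih hxb,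
      ofDigits_digits_eq_mod_add c hb x, mul_add, pow_succ', mul_assoc, add_left_comm]

end Digits

theorem Z_eq_ofDigits_add_two_mul_ofDigits (x y : ℕ) :
    Z x y = Nat.ofDigits 4 (Nat.digits 2 x) + 2 * Nat.ofDigits 4 (Nat.digits 2 y) := by
  have hfin (n : ℕ) : (fun i ↦ n / 2 ^ i % 2 * 4 ^ i).HasFiniteSupport :=
    (Finset.finite_toSet _).subset (support_div_pow_mod_mul_pow_subset 4 one_lt_two n)
  have hsum (n : ℕ) : ∑ᶠ i, n / 2 ^ i % 2 * 4 ^ i = Nat.ofDigits 4 (Nat.digits 2 n) :=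
    finsum_div_pow_mod_mul_pow 4 one_lt_two n
  calc Z x y = ∑ᶠ i, (x / 2 ^ i % 2 * 4 ^ i + 2 * (y / 2 ^ i % 2 * 4 ^ i)) :=
        finsum_congr fun i ↦ by ring
    _ = ∑ᶠ i, x / 2 ^ i % 2 * 4 ^ i + 2 * ∑ᶠ i, y / 2 ^ i % 2 * 4 ^ i := by
        rw [mul_finsum' _ _ (hfin y), finsum_add_distrib (hfin x) ((hfin y).fun_mul_right _)]
    _ = Nat.ofDigits 4 (Nat.digits 2 x) + 2 * Nat.ofDigits 4 (Nat.digits 2 y) := by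
        rw [hsum, hsum]

/-- The z-order map splits over aligned blocks: the high bits contribute a multiple
of `4^j` and the low bits contribute `Z x y`. -/
theorem zorder_split (j a b x y : ℕ) (hx : x < 2 ^ j) (hy : y < 2 ^ j) :
    Z (a * 2 ^ j + x) (b * 2 ^ j + y) = 4 ^ j * Z a b + Z x y := by
  simp only [Z_eq_ofDigits_add_two_mul_ofDigits, ofDigits_digits_mul_pow_add 4 one_lt_two _ hx,
    ofDigits_digits_mul_pow_add 4 one_lt_two _ hy]
  ring
end

section
/- For all natural numbers j, a, b, the image under the bit-interleaving (z-order) map Z of the aligned 2^j × 2^j subsquare {(x, y) : a * 2^j ≤ x < (a+1) * 2^j and b * 2^j ≤ y < (b+1) * 2^j} is exactly the contiguous interval of integers {m : 4^j * Z a b ≤ m < 4^j * (Z a b + 1)}. In other words, the z-order indices of the points of any aligned subsquare form a set of consecutive integers. -/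
/-! In base 4, the digits of `Z x y` are the pairs of bits of `x` and `y`. Hence `Z` is a bijection
`ℕ × ℕ → ℕ`, and dropping the last `j` base-4 digits of `Z x y` amounts to dropping the last `j`
bits of `x` and of `y`. An aligned subsquare is a fibre of the truncation of bits and the interval
is a fibre of the truncation of base-4 digits, so `Z` carries one onto the other. -/

theorem Z_eq_sum_range {x y n : ℕ} (hx : x < 2 ^ n) (hy : y < 2 ^ n) :
    Z x y = ∑ i ∈ Finset.range n, (x / 2 ^ i % 2 * 4 ^ i + y / 2 ^ i % 2 * 2 * 4 ^ i) := by
  refine finsum_eq_sum_of_support_subset _ (Function.support_subset_iff'.2 fun i hi => ?_)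
  have hni : 2 ^ n ≤ 2 ^ i := Nat.pow_le_pow_right two_pos (by simpa using hi)
  simp [Nat.div_eq_of_lt (hx.trans_le hni), Nat.div_eq_of_lt (hy.trans_le hni)]

theorem Z_eq_mod_add_four_mul (x y : ℕ) :
    Z x y = x % 2 + 2 * (y % 2) + 4 * Z (x / 2) (y / 2) := by
  have hlt : x + y < 2 ^ (x + y) := Nat.lt_two_pow_self
  rw [Z_eq_sum_range (n := x + y + 1) (by lia) (by lia),
    Z_eq_sum_range (n := x + y) (by lia) (by lia),
    Finset.sum_range_succ', Finset.mul_sum, add_comm]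
  congr 1
  · simp [mul_comm]
  · refine Finset.sum_congr rfl fun i _ => ?_
    rw [Nat.div_div_eq_div_mul, Nat.div_div_eq_div_mul, ← pow_succ']
    ring

theorem Z_mod_four (x y : ℕ) : Z x y % 4 = x % 2 + 2 * (y % 2) := by
  have := Z_eq_mod_add_four_mul x y
  lia

theorem Z_div_four (x y : ℕ) : Z x y / 4 = Z (x / 2) (y / 2) := by
  have := Z_eq_mod_add_four_mul x y
  lia

theorem Z_div_four_pow (j x y : ℕ) : Z x y / 4 ^ j = Z (x / 2 ^ j) (y / 2 ^ j) := by
  induction j with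
  | zero => simp only [pow_zero, Nat.div_one]
  | succ j ih => simp only [pow_succ, ← Nat.div_div_eq_div_mul, ih, Z_div_four]

theorem Z_div_four_pow_mod_four (i x y : ℕ) :
    Z x y / 4 ^ i % 4 = x / 2 ^ i % 2 + 2 * (y / 2 ^ i % 2) := by
  rw [Z_div_four_pow, Z_mod_four]

theorem Z_inj {x y u v : ℕ} : Z x y = Z u v ↔ x = u ∧ y = v := by
  refine ⟨fun h => ?_, by rintro ⟨rfl, rfl⟩; rfl⟩
  have bits_eq (i : ℕ) : x / 2 ^ i % 2 = u / 2 ^ i % 2 ∧ y / 2 ^ i % 2 = v / 2 ^ i % 2 := by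
    have digit_eq := Z_div_four_pow_mod_four i x y
    rw [h, Z_div_four_pow_mod_four] at digit_eq
    lia
  exact ⟨Nat.eq_of_testBit_eq fun i => by simp only [Nat.testBit_eq_decide_div_mod_eq, bits_eq i],
    Nat.eq_of_testBit_eq fun i => by simp only [Nat.testBit_eq_decide_div_mod_eq, bits_eq i]⟩

theorem Z_injective : Function.Injective fun p : ℕ × ℕ => Z p.1 p.2 :=
  fun _ _ h => Prod.ext_iff.2 (Z_inj.1 h)

theorem Z_surjective : Function.Surjective fun p : ℕ × ℕ => Z p.1 p.2 := by
  intro m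
  induction m using Nat.strong_induction_on with
  | _ m ih =>
    rcases Nat.eq_zero_or_pos m with rfl | hm
    · exact ⟨(0, 0), by simp [Z]⟩
    · obtain ⟨⟨x, y⟩, hxy : Z x y = m / 4⟩ := ih (m / 4) (by lia)
      have hx : (2 * x + m % 2) / 2 = x := by lia
      have hy : (2 * y + m / 2 % 2) / 2 = y := by lia
      refine ⟨(2 * x + m % 2, 2 * y + m / 2 % 2), ?_⟩
      change Z _ _ = m
      rw [Z_eq_mod_add_four_mul, hx, hy, hxy]
      lia

theorem nat_div_eq_iff_mul_le_and_lt {n k c : ℕ} (hk : 0 < k) :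
    n / k = c ↔ c * k ≤ n ∧ n < (c + 1) * k := by
  rw [← Nat.le_div_iff_mul_le hk, ← Nat.div_lt_iff_lt_mul hk]
  lia

/-- The z-order indices of the points of any aligned `2^j × 2^j` subsquare form a
contiguous interval of integers. -/
theorem zorder_subsquare_image (j a b : ℕ) :
    (fun p : ℕ × ℕ => Z p.1 p.2) ''
        {p : ℕ × ℕ | a * 2 ^ j ≤ p.1 ∧ p.1 < (a + 1) * 2 ^ j ∧
                     b * 2 ^ j ≤ p.2 ∧ p.2 < (b + 1) * 2 ^ j} =
      {m : ℕ | 4 ^ j * Z a b ≤ m ∧ m < 4 ^ j * (Z a b + 1)} := by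
  ext m
  obtain ⟨⟨x, y⟩, rfl⟩ := Z_surjective m
  rw [Z_injective.mem_set_image, Set.mem_ofPred_eq, Set.mem_ofPred_eq]
  have hsquare : (a * 2 ^ j ≤ x ∧ x < (a + 1) * 2 ^ j ∧ b * 2 ^ j ≤ y ∧ y < (b + 1) * 2 ^ j) ↔
      x / 2 ^ j = a ∧ y / 2 ^ j = b := by
    simp only [nat_div_eq_iff_mul_le_and_lt (Nat.two_pow_pos j), and_assoc]
  have hinterval : (4 ^ j * Z a b ≤ Z x y ∧ Z x y < 4 ^ j * (Z a b + 1)) ↔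
      Z x y / 4 ^ j = Z a b := by
    simp only [nat_div_eq_iff_mul_le_and_lt (show 0 < 4 ^ j by positivity), mul_comm (4 ^ j)]
  rw [hsquare, hinterval, Z_div_four_pow, Z_inj]
end

section
/- Let c, p, q be points of the Euclidean plane with p ≠ c and q ≠ c. If the angle ∠ p c q at the vertex c is strictly less than π/3, then dist p q < max (dist p c) (dist q c); that is, one of p, q is strictly closer to the other than it is to c. -/
open EuclideanGeometry

theorem sq_add_sq_le_sq_max_add_mul {R : Type*} [Semiring R] [LinearOrder R] [IsOrderedRing R]
    {a b : R} (ha : 0 ≤ a) (hb : 0 ≤ b) : a ^ 2 + b ^ 2 ≤ max a b ^ 2 + a * b := by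
  rcases le_total a b with hab | hba
  · rw [max_eq_right hab, add_comm, sq a]
    gcongr
  · rw [max_eq_left hba, sq b]
    gcongr

section InnerProductSpace

variable {V P : Type*} [NormedAddCommGroup V] [InnerProductSpace ℝ V] [MetricSpace P]
  [NormedAddTorsor V P] {c p q : P}

theorem dist_sq_add_mul_lt_of_angle_lt_pi_div_three (hp : p ≠ c) (hq : q ≠ c)
    (h : ∠ p c q < Real.pi / 3) :
    dist p q ^ 2 + dist p c * dist q c < dist p c ^ 2 + dist q c ^ 2 := by
  have half_lt_cos : 1 / 2 < Real.cos (∠ p c q) := by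
    rw [← Real.cos_pi_div_three]
    exact Real.cos_lt_cos_of_nonneg_of_le_pi (angle_nonneg p c q)
      (by linarith [Real.pi_pos]) h
  have mul_half_lt_mul_cos :=
    mul_lt_mul_of_pos_left half_lt_cos (mul_pos (dist_pos.mpr hp) (dist_pos.mpr hq))
  linarith [law_cos p c q]

theorem dist_lt_max_of_angle_lt_pi_div_three_general (hp : p ≠ c) (hq : q ≠ c)
    (h : ∠ p c q < Real.pi / 3) : dist p q < max (dist p c) (dist q c) := by
  have sq_lt_sq_max : dist p q ^ 2 < max (dist p c) (dist q c) ^ 2 :=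
    lt_of_add_lt_add_right <|
      (dist_sq_add_mul_lt_of_angle_lt_pi_div_three hp hq h).trans_le
        (sq_add_sq_le_sq_max_add_mul dist_nonneg dist_nonneg)
  exact lt_of_pow_lt_pow_left₀ 2 (le_max_of_le_left dist_nonneg) sq_lt_sq_max

end InnerProductSpace

/-- If the angle `∠ p c q` at `c` is strictly less than `π / 3`, then one of
`p`, `q` is strictly closer to the other than it is to `c`. -/
theorem dist_lt_max_of_angle_lt_pi_div_three
    (c p q : EuclideanSpace ℝ (Fin 2)) (hp : p ≠ c) (hq : q ≠ c)
    (h : ∠ p c q < Real.pi / 3) :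
    dist p q < max (dist p c) (dist q c) :=
  dist_lt_max_of_angle_lt_pi_div_three_general hp hq h
end

section
/- Let c be a point of the Euclidean plane and let p₁, p₂, p₃ be three points, each lying in the closed quadrant Q(c) = {v : c.1 ≤ v.1 and c.2 ≤ v.2} and each distinct from c. Then there exist indices i ≠ j such that the angle ∠ pᵢ c pⱼ at the vertex c is at most π/4. -/
open EuclideanGeometry

open scoped NNReal RealInnerProductSpace

/-!
The cone spanned by two vectors `x` and `y` is cut by the bisector of the angle between them into
two cones of half that angle, and of three vectors in the cone two lie in the same half. Angles are
additive along a cone, so two nonzero vectors of a cone form at most the angle of the cone: cut the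
cone along the first vector, and the second one lies in one of the two pieces. A quadrant is the
cone spanned by two orthogonal vectors.
-/

section Cone

variable {𝕜 M : Type*} [Semifield 𝕜] [LinearOrder 𝕜] [CanonicallyOrderedAdd 𝕜]
  [AddCommMonoid M] [Module 𝕜 M] {a b s t : 𝕜} {x y u : M}

lemma smul_add_smul_mem_span_pair_of_mul_le_mul (hb : b ≠ 0) (h : t * a ≤ s * b) :
    s • x + t • y ∈ Submodule.span 𝕜 {x, a • x + b • y} := by
  obtain ⟨r, hr⟩ := exists_add_of_le h
  refine Submodule.mem_span_pair.mpr ⟨r / b, t / b, ?_⟩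
  have hs : s = r / b + t / b * a := by
    field_simp
    rw [hr, add_comm]
  rw [hs]
  match_scalars <;> field_simp

lemma mem_span_pair_smul_add_smul_or (h : a ≠ 0 ∨ b ≠ 0) (hu : u ∈ Submodule.span 𝕜 {x, y}) :
    u ∈ Submodule.span 𝕜 {x, a • x + b • y} ∨ u ∈ Submodule.span 𝕜 {a • x + b • y, y} := by
  obtain ⟨s, t, rfl⟩ := Submodule.mem_span_pair.mp hu
  have hleft (hb : b ≠ 0) (hle : t * a ≤ s * b) :
      s • x + t • y ∈ Submodule.span 𝕜 {x, a • x + b • y} :=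
    smul_add_smul_mem_span_pair_of_mul_le_mul hb hle
  have hright (ha : a ≠ 0) (hle : s * b ≤ t * a) :
      s • x + t • y ∈ Submodule.span 𝕜 {a • x + b • y, y} := by
    rw [Set.pair_comm, add_comm (s • x), add_comm (a • x)]
    exact smul_add_smul_mem_span_pair_of_mul_le_mul ha hle
  rcases eq_or_ne a 0 with rfl | ha
  · exact .inl (hleft (by simpa using h) (by simp))
  rcases eq_or_ne b 0 with rfl | hb
  · exact .inr (hright ha (by simp))
  exact (le_total (t * a) (s * b)).imp (hleft hb) (hright ha)

lemma mem_span_nnreal_range_basis_of_repr_nonneg {ι V : Type*} [AddCommGroup V] [Module ℝ V]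
    (b : Module.Basis ι ℝ V) {v : V} (h : ∀ i, 0 ≤ b.repr v i) :
    v ∈ Submodule.span ℝ≥0 (Set.range b) := by
  rw [← b.linearCombination_repr v, Finsupp.linearCombination_apply]
  exact Submodule.sum_mem _ fun i _ ↦
    Submodule.smul_mem _ (⟨b.repr v i, h i⟩ : ℝ≥0) (Submodule.subset_span ⟨i, rfl⟩)

lemma sub_mem_span_nnreal_range_basisFun_of_le {ι : Type*} [Fintype ι] {c v : EuclideanSpace ℝ ι}
    (h : ∀ i, c i ≤ v i) :
    v - c ∈ Submodule.span ℝ≥0 (Set.range (EuclideanSpace.basisFun ι ℝ)) := by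
  rw [← OrthonormalBasis.coe_toBasis]
  exact mem_span_nnreal_range_basis_of_repr_nonneg _ (by simpa using h)

end Cone

section Angle

variable {V : Type*} [NormedAddCommGroup V] [InnerProductSpace ℝ V] {x y u v : V}

lemma angle_left_le_angle_of_mem_span_pair (hu : u ≠ 0) (hmem : u ∈ Submodule.span ℝ≥0 {x, y}) :
    InnerProductGeometry.angle x u ≤ InnerProductGeometry.angle x y := by
  rw [InnerProductGeometry.angle_eq_angle_add_add_angle_add_of_mem_span hu hmem]
  exact le_add_of_nonneg_right (InnerProductGeometry.angle_nonneg u y)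

lemma angle_right_le_angle_of_mem_span_pair (hu : u ≠ 0) (hmem : u ∈ Submodule.span ℝ≥0 {x, y}) :
    InnerProductGeometry.angle u y ≤ InnerProductGeometry.angle x y := by
  rw [InnerProductGeometry.angle_eq_angle_add_add_angle_add_of_mem_span hu hmem]
  exact le_add_of_nonneg_left (InnerProductGeometry.angle_nonneg x u)

lemma angle_le_angle_of_mem_span_pair (hu : u ≠ 0) (hv : v ≠ 0)
    (humem : u ∈ Submodule.span ℝ≥0 {x, y}) (hvmem : v ∈ Submodule.span ℝ≥0 {x, y}) :
    InnerProductGeometry.angle u v ≤ InnerProductGeometry.angle x y := by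
  obtain ⟨a, b, rfl⟩ := Submodule.mem_span_pair.mp humem
  have hab : a ≠ 0 ∨ b ≠ 0 := by
    contrapose! hu
    simp [hu]
  rcases mem_span_pair_smul_add_smul_or hab hvmem with hleft | hright
  · rw [InnerProductGeometry.angle_comm]
    exact (angle_right_le_angle_of_mem_span_pair hv hleft).trans
      (angle_left_le_angle_of_mem_span_pair hu humem)
  · exact (angle_left_le_angle_of_mem_span_pair hv hright).trans
      (angle_right_le_angle_of_mem_span_pair hu humem)

/-- The sum of `x` and `y` after scaling both to the length `‖x‖ * ‖y‖`, which spans the bisector of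
the angle between `x` and `y`. The coefficients are in `ℝ≥0` so that it visibly belongs to the cone
spanned by `x` and `y`. It vanishes if `x` and `y` point in opposite directions; it still makes half
of their angle `π` with both of them, since the angle with the zero vector is `π / 2` by
convention. -/
noncomputable def angleBisector (x y : V) : V := ‖y‖₊ • x + ‖x‖₊ • y

lemma angleBisector_comm (x y : V) : angleBisector x y = angleBisector y x :=
  add_comm _ _

lemma angleBisector_mem_span_pair (x y : V) : angleBisector x y ∈ Submodule.span ℝ≥0 {x, y} :=
  Submodule.mem_span_pair.mpr ⟨‖y‖₊, ‖x‖₊, rfl⟩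

lemma inner_left_angleBisector (x y : V) :
    ⟪x, angleBisector x y⟫ = ‖x‖ * (‖x‖ * ‖y‖ + ⟪x, y⟫) := by
  simp only [angleBisector, NNReal.smul_def, coe_nnnorm, inner_add_right, inner_smul_right,
    real_inner_self_eq_norm_sq]
  ring

lemma angle_left_angleBisector_eq_arccos (hx : x ≠ 0) (y : V) :
    InnerProductGeometry.angle x (angleBisector x y) =
      Real.arccos ((‖x‖ * ‖y‖ + ⟪x, y⟫) / ‖angleBisector x y‖) := by
  rw [InnerProductGeometry.angle, inner_left_angleBisector,
    mul_div_mul_left _ _ (norm_ne_zero_iff.mpr hx)]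

lemma angle_left_angleBisector_eq_angle_right (hx : x ≠ 0) (hy : y ≠ 0) :
    InnerProductGeometry.angle x (angleBisector x y) =
      InnerProductGeometry.angle (angleBisector x y) y := by
  rw [InnerProductGeometry.angle_comm _ y, angleBisector_comm x y,
    angle_left_angleBisector_eq_arccos hy, angleBisector_comm y x,
    angle_left_angleBisector_eq_arccos hx, mul_comm ‖x‖, real_inner_comm]

lemma angle_eq_pi_of_angleBisector_eq_zero (hx : x ≠ 0) (hy : y ≠ 0) (h : angleBisector x y = 0) :
    InnerProductGeometry.angle x y = Real.pi := by
  have hinner := inner_left_angleBisector x y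
  rw [h, inner_zero_right, zero_eq_mul, or_iff_right (norm_ne_zero_iff.mpr hx)] at hinner
  rw [← InnerProductGeometry.inner_eq_neg_mul_norm_iff_angle_eq_pi hx hy]
  linarith

lemma angle_left_angleBisector (hx : x ≠ 0) (hy : y ≠ 0) :
    InnerProductGeometry.angle x (angleBisector x y) = InnerProductGeometry.angle x y / 2 := by
  by_cases hzero : angleBisector x y = 0
  · rw [hzero, InnerProductGeometry.angle_zero_right,
      angle_eq_pi_of_angleBisector_eq_zero hx hy hzero]
  · linarith [InnerProductGeometry.angle_eq_angle_add_add_angle_add_of_mem_span hzero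
      (angleBisector_mem_span_pair x y), angle_left_angleBisector_eq_angle_right hx hy]

lemma angle_right_angleBisector (hx : x ≠ 0) (hy : y ≠ 0) :
    InnerProductGeometry.angle (angleBisector x y) y = InnerProductGeometry.angle x y / 2 := by
  rw [← angle_left_angleBisector_eq_angle_right hx hy, angle_left_angleBisector hx hy]

lemma mem_span_pair_angleBisector_or (hx : x ≠ 0) (hu : u ∈ Submodule.span ℝ≥0 {x, y}) :
    u ∈ Submodule.span ℝ≥0 {x, angleBisector x y} ∨
      u ∈ Submodule.span ℝ≥0 {angleBisector x y, y} :=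
  mem_span_pair_smul_add_smul_or (.inr (nnnorm_ne_zero_iff.mpr hx)) hu

lemma angle_eq_pi_div_two_of_orthonormal {ι : Type*} {e : ι → V} (he : Orthonormal ℝ e) {i j : ι}
    (hij : i ≠ j) : InnerProductGeometry.angle (e i) (e j) = Real.pi / 2 :=
  (InnerProductGeometry.inner_eq_zero_iff_angle_eq_pi_div_two _ _).mp (he.inner_eq_zero hij)

end Angle

theorem exists_angle_le_pi_div_four_of_three_in_quadrant_general {V P ι : Type*}
    [NormedAddCommGroup V] [InnerProductSpace ℝ V] [MetricSpace P] [NormedAddTorsor V P]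
    [Fintype ι] (hι : 2 < Fintype.card ι) {x y : V} (hx : x ≠ 0) (hy : y ≠ 0) (c : P) (p : ι → P)
    (hcone : ∀ i, p i -ᵥ c ∈ Submodule.span ℝ≥0 {x, y}) (hne : ∀ i, p i ≠ c) :
    ∃ i j, i ≠ j ∧ ∠ (p i) c (p j) ≤ InnerProductGeometry.angle x y / 2 := by
  have hne' (i : ι) : p i -ᵥ c ≠ 0 := vsub_ne_zero.mpr (hne i)
  obtain ⟨i, j, hij, hhalf⟩ := Fintype.exists_ne_map_eq_of_card_lt
    (fun i ↦ p i -ᵥ c ∈ Submodule.span ℝ≥0 {x, angleBisector x y}) (by simpa using hι)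
  refine ⟨i, j, hij, ?_⟩
  by_cases hi : p i -ᵥ c ∈ Submodule.span ℝ≥0 {x, angleBisector x y}
  · exact (angle_le_angle_of_mem_span_pair (hne' i) (hne' j) hi (hhalf.mp hi)).trans_eq
      (angle_left_angleBisector hx hy)
  · have hi' := (mem_span_pair_angleBisector_or hx (hcone i)).resolve_left hi
    have hj' := (mem_span_pair_angleBisector_or hx (hcone j)).resolve_left (hhalf ▸ hi)
    exact (angle_le_angle_of_mem_span_pair (hne' i) (hne' j) hi' hj').trans_eq
      (angle_right_angleBisector hx hy)

/-- Among any three points of the closed upper-right quadrant at `c`, each distinct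
from `c`, two of them subtend an angle at most `π / 4` at `c`. -/
theorem exists_angle_le_pi_div_four_of_three_in_quadrant
    (c : EuclideanSpace ℝ (Fin 2)) (p : Fin 3 → EuclideanSpace ℝ (Fin 2))
    (hquad : ∀ i, c 0 ≤ p i 0 ∧ c 1 ≤ p i 1) (hne : ∀ i, p i ≠ c) :
    ∃ i j : Fin 3, i ≠ j ∧ ∠ (p i) c (p j) ≤ Real.pi / 4 := by
  let e := EuclideanSpace.basisFun (Fin 2) ℝ
  have hrange : Set.range e = {e 0, e 1} := by
    ext v
    simp only [Set.mem_range, Fin.exists_fin_two, Set.mem_insert_iff, Set.mem_singleton_iff,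
      eq_comm]
  have hcone (i : Fin 3) : p i - c ∈ Submodule.span ℝ≥0 {e 0, e 1} :=
    hrange ▸ sub_mem_span_nnreal_range_basisFun_of_le (Fin.forall_fin_two.mpr (hquad i))
  have hangle : InnerProductGeometry.angle (e 0) (e 1) / 2 = Real.pi / 4 := by
    rw [angle_eq_pi_div_two_of_orthonormal e.orthonormal Fin.zero_ne_one]
    ring
  exact hangle ▸ exists_angle_le_pi_div_four_of_three_in_quadrant_general (by simp)
    (e.orthonormal.ne_zero 0) (e.orthonormal.ne_zero 1) c p hcone hne
end

section
/- Let c be a point of the Euclidean plane and let S be a set of points, each lying in the closed quadrant Q(c) = {v : c.1 ≤ v.1 and c.2 ≤ v.2} and each distinct from c, such that every point of S is strictly closer to c than to any other point of S (i.e., for all p, q ∈ S with p ≠ q, dist p c < dist p q). Then S has at most 2 elements. -/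
/-!
In a triangle with vertices `p`, `q`, `c` whose angle at `c` is at most `π / 3`, the side `pq` is
not strictly the longest. So two points of `S` are seen from `c` at an angle of more than `π / 3`,
while the diagonal through `c` cuts the quadrant into two sectors of angle `π / 4`, according to
which coordinate of `p - c` is the larger. The bound `π / 3` on the angle between `u` and `v` is
expressed by `‖u‖ * ‖v‖ ≤ 2 * ⟪u, v⟫`, because Mathlib's `angle` is `π / 2` when a vector is zero.
-/

open scoped RealInnerProductSpace

section Triangle

variable {V P : Type*} [SeminormedAddCommGroup V] [InnerProductSpace ℝ V]

lemma norm_sub_le_max_of_norm_mul_norm_le_two_mul_inner {u v : V}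
    (h : ‖u‖ * ‖v‖ ≤ 2 * ⟪u, v⟫) : ‖u - v‖ ≤ max ‖u‖ ‖v‖ := by
  wlog huv : ‖v‖ ≤ ‖u‖ generalizing u v
  · rw [norm_sub_rev, max_comm]
    exact this (by rwa [mul_comm, real_inner_comm]) (le_of_not_ge huv)
  refine le_max_of_le_left (le_of_sq_le_sq ?_ (norm_nonneg u))
  calc ‖u - v‖ ^ 2 = ‖u‖ ^ 2 - 2 * ⟪u, v⟫ + ‖v‖ ^ 2 := norm_sub_sq_real u v
    _ ≤ ‖u‖ ^ 2 - ‖u‖ * ‖v‖ + ‖v‖ * ‖v‖ := by rw [sq ‖v‖]; gcongr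
    _ ≤ ‖u‖ ^ 2 - ‖u‖ * ‖v‖ + ‖u‖ * ‖v‖ := by gcongr
    _ = ‖u‖ ^ 2 := sub_add_cancel _ _

lemma dist_le_max_of_norm_mul_norm_le_two_mul_inner [PseudoMetricSpace P] [NormedAddTorsor V P]
    {c p q : P} (h : ‖p -ᵥ c‖ * ‖q -ᵥ c‖ ≤ 2 * ⟪p -ᵥ c, q -ᵥ c⟫) :
    dist p q ≤ max (dist p c) (dist q c) := by
  simpa only [vsub_sub_vsub_cancel_right, ← dist_eq_norm_vsub V] using
    norm_sub_le_max_of_norm_mul_norm_le_two_mul_inner h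

end Triangle

section LargestCoordinate

variable {ι : Type*} [Fintype ι] {u v : EuclideanSpace ℝ ι} {i : ι}

lemma norm_le_sqrt_card_mul_abs_of_forall_abs_le (hu : ∀ j, |u j| ≤ |u i|) :
    ‖u‖ ≤ √(Fintype.card ι) * |u i| := by
  refine le_of_sq_le_sq ?_ (by positivity)
  calc ‖u‖ ^ 2 = ∑ j, u j ^ 2 := EuclideanSpace.real_norm_sq_eq u
    _ ≤ ∑ _j : ι, u i ^ 2 := Finset.sum_le_sum fun j _ => sq_le_sq.2 (hu j)
    _ = (√(Fintype.card ι) * |u i|) ^ 2 := by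
      rw [Finset.sum_const, Finset.card_univ, nsmul_eq_mul, mul_pow, sq_abs,
        Real.sq_sqrt (Nat.cast_nonneg _)]

lemma apply_mul_apply_le_inner_of_forall_mul_nonneg (huv : ∀ j, 0 ≤ u j * v j) (i : ι) :
    u i * v i ≤ ⟪u, v⟫ := by
  rw [PiLp.inner_apply]
  simp only [Real.inner_apply]
  exact Finset.single_le_sum (f := fun j => u j * v j) (fun j _ => huv j) (Finset.mem_univ i)

lemma norm_mul_norm_le_card_mul_inner_of_forall_le (hu : ∀ j, 0 ≤ u j) (hv : ∀ j, 0 ≤ v j)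
    (hui : ∀ j, u j ≤ u i) (hvi : ∀ j, v j ≤ v i) :
    ‖u‖ * ‖v‖ ≤ Fintype.card ι * ⟪u, v⟫ := by
  have norm_u : ‖u‖ ≤ √(Fintype.card ι) * |u i| :=
    norm_le_sqrt_card_mul_abs_of_forall_abs_le fun j => abs_le_abs_of_nonneg (hu j) (hui j)
  have norm_v : ‖v‖ ≤ √(Fintype.card ι) * |v i| :=
    norm_le_sqrt_card_mul_abs_of_forall_abs_le fun j => abs_le_abs_of_nonneg (hv j) (hvi j)
  calc ‖u‖ * ‖v‖ ≤ (√(Fintype.card ι) * |u i|) * (√(Fintype.card ι) * |v i|) := by gcongr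
    _ = Fintype.card ι * (u i * v i) := by
      rw [mul_mul_mul_comm, Real.mul_self_sqrt (Nat.cast_nonneg _), abs_of_nonneg (hu i),
        abs_of_nonneg (hv i)]
    _ ≤ Fintype.card ι * ⟪u, v⟫ := by
      gcongr
      exact apply_mul_apply_le_inner_of_forall_mul_nonneg (fun j => mul_nonneg (hu j) (hv j)) i

end LargestCoordinate

/-- If every point of a set `S`, contained in the closed quadrant at `c` and
avoiding `c`, is strictly closer to `c` than to any other point of `S`, then
`S` has at most two elements. -/
theorem quadrant_special_points_le_two
    (c : EuclideanSpace ℝ (Fin 2)) (S : Set (EuclideanSpace ℝ (Fin 2)))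
    (hquad : ∀ p ∈ S, c 0 ≤ p 0 ∧ c 1 ≤ p 1)
    (hne : ∀ p ∈ S, p ≠ c)
    (hclose : ∀ p ∈ S, ∀ q ∈ S, p ≠ q → dist p c < dist p q) :
    S.encard ≤ 2 := by
  have sub_apply_nonneg : ∀ p ∈ S, ∀ j, 0 ≤ (p - c) j := fun p hp =>
    Fin.forall_fin_two.2 ⟨sub_nonneg.2 (hquad p hp).1, sub_nonneg.2 (hquad p hp).2⟩
  choose largestCoord le_largestCoord using
    fun p : EuclideanSpace ℝ (Fin 2) => Finite.exists_max (p - c)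
  have largestCoord_injOn : Set.InjOn largestCoord S := by
    intro p hp q hq hpq
    by_contra p_ne_q
    have angle_le : ‖p -ᵥ c‖ * ‖q -ᵥ c‖ ≤ 2 * ⟪p -ᵥ c, q -ᵥ c⟫ := by
      simpa only [vsub_eq_sub, Fintype.card_fin, Nat.cast_ofNat] using
        norm_mul_norm_le_card_mul_inner_of_forall_le (sub_apply_nonneg p hp)
          (sub_apply_nonneg q hq) (le_largestCoord p) (hpq ▸ le_largestCoord q)
    refine (dist_le_max_of_norm_mul_norm_le_two_mul_inner angle_le).not_gt (max_lt ?_ ?_)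
    · exact hclose p hp q hq p_ne_q
    · exact dist_comm p q ▸ hclose q hq p hp (Ne.symm p_ne_q)
  calc S.encard ≤ (Set.univ : Set (Fin 2)).encard :=
        Set.encard_le_encard_of_injOn (Set.mapsTo_univ largestCoord S) largestCoord_injOn
    _ = 2 := by simp
end
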